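/- Let K be a field of characteristic 0 and let p, q ∈ Kˣ. The quantum Weyl algebras A_1^p(K) and A_1^q(K) are isomorphic as K-algebras if and only if p = q or p = q⁻¹. -/

import Mathlib

/-- The defining relation of the quantum Weyl algebra `A_1^q(K)`:
`x * y = q • (y * x) + 1`, where `x, y` are the two free generators. -/
inductive WeylRel (K : Type*) [Field K] (q : K) :
    FreeAlgebra K (Fin 2) → FreeAlgebra K (Fin 2) → Prop
  | rel : WeylRel K q (FreeAlgebra.ι K 0 * FreeAlgebra.ι K 1)
      (q • (FreeAlgebra.ι K 1 * FreeAlgebra.ι K 0) + 1)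

/-- The quantum Weyl algebra `A_1^q(K)`. -/
abbrev QuantumWeyl (K : Type*) [Field K] (q : K) := RingQuot (WeylRel K q)

/-!
Let `q ≠ 0, 1`. The algebra `A_1^q` has a character `χ : x ↦ T` into `K[T;T⁻¹]`. For characters
`f` and `g` with values in a commutative domain, there is a noncommutative representation by upper
triangular `2 × 2` matrices with diagonal `(f, g)` if and only if `f x = q • g x`; in one direction
this is because the commutator `z = x y - y x` is mapped to a strictly upper triangular matrix and
satisfies `x z = q z x`. In particular the pair `(χ ∘ (T ↦ q T), χ)` admits such a representation,
which we transport along an isomorphism `A_1^p ≃ A_1^q`. The image of the `x` of `A_1^p` under the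
second character is a unit `a Tⁿ`, and its image under the first one is `a qⁿ Tⁿ`, so `qⁿ = p`.
Since the image of the second character contains `T`, necessarily `n = ±1`. The algebra `A_1^1` is
different from all the others because it has no characters at all.
-/

section Laurent

open LaurentPolynomial

theorem exists_eq_smul_T_of_mul_eq_one {R : Type*} [CommRing R] [IsDomain R] {f g : R[T;T⁻¹]}
    (h : f * g = 1) : ∃ (u : Rˣ) (n : ℤ), f = u • T n ∧ g = u⁻¹ • T (-n) := by
  obtain ⟨m, f', hf⟩ := f.exists_T_pow
  obtain ⟨k, g', hg⟩ := g.exists_T_pow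
  have h_mul : f' * g' = Polynomial.X ^ (m + k) := by
    apply Polynomial.toLaurent_injective
    rw [map_mul, hf, hg, Polynomial.toLaurent_X_pow, Nat.cast_add, T_add]
    linear_combination (T m * T k) * h
  obtain ⟨i, -, hi⟩ := (dvd_prime_pow Polynomial.prime_X _).1 (Dvd.intro _ h_mul)
  obtain ⟨v, hv⟩ := hi.symm
  obtain ⟨_, ⟨u, rfl⟩, huv⟩ := Polynomial.isUnit_iff.1 v.isUnit
  have hfu : f = u • T (i - m : ℤ) := by
    calc f = Polynomial.toLaurent f' * T (-m) := by rw [hf, mul_T_assoc]; simp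
      _ = u • T (i - m : ℤ) := by
        rw [← hv, ← huv, map_mul, Polynomial.toLaurent_X_pow, Polynomial.toLaurent_C,
          Units.smul_def, smul_eq_C_mul, T_sub]
        ring
  refine ⟨u, i - m, hfu, (left_inv_eq_right_inv ?_ h).symm⟩
  rw [hfu, smul_mul_smul_comm, ← T_add]
  simp

theorem dvd_of_T_mem_range_mapDomain {R : Type*} [CommSemiring R] [Nontrivial R] {m n : ℤ}
    (h : (T m : R[T;T⁻¹]) ∈
      (AddMonoidAlgebra.mapDomainAlgHom R R (AddMonoidHom.mulLeft n)).range) : n ∣ m := by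
  obtain ⟨f, hf⟩ := h
  by_contra hnm
  have h_coeff : (T m : R[T;T⁻¹]).coeff m = 0 := by
    rw [← hf]
    exact Finsupp.mapDomain_of_notMem_range _ _ fun ⟨k, hk⟩ => hnm ⟨k, hk.symm⟩
  simp at h_coeff

/-- The substitution `T ↦ q T` of Laurent polynomials. -/
noncomputable def laurentScale {R : Type*} [CommSemiring R] (q : Rˣ) :
    R[T;T⁻¹] →ₐ[R] R[T;T⁻¹] :=
  AddMonoidAlgebra.lift R R[T;T⁻¹] ℤ
    { toFun n := (q ^ n.toAdd) • T n.toAdd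
      map_one' := by simp
      map_mul' m n := by rw [toAdd_mul, zpow_add, T_add, smul_mul_smul_comm] }

@[simp]
theorem laurentScale_T {R : Type*} [CommSemiring R] (q : Rˣ) (n : ℤ) :
    laurentScale q (T n) = q ^ n • T n :=
  (AddMonoidAlgebra.lift_single _ _ _).trans (one_smul _ _)

end Laurent

/-- The elements `X`, `Y` satisfy the defining relation of the quantum Weyl algebra with
parameter `q`. -/
def IsWeylPair {K A : Type*} [CommRing K] [Ring A] [Algebra K A] (q : K) (X Y : A) : Prop :=
  X * Y = q • (Y * X) + 1

namespace IsWeylPair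

variable {K A B : Type*} [CommRing K] [Ring A] [Algebra K A] [Ring B] [Algebra K B]
  {p q : K} {X Y : A}

theorem map (h : IsWeylPair q X Y) (f : A →ₐ[K] B) : IsWeylPair q (f X) (f Y) := by
  simpa [IsWeylPair] using congrArg f h

theorem swap (h : IsWeylPair q X Y) (hpq : p * q = 1) {a b : K} (hab : a * b = -q) :
    IsWeylPair p (a • Y) (b • X) := by
  have hpba : p * (b * a) = -1 := by linear_combination p * hab - hpq
  have hpbaq : p * (b * a) * q = a * b := by linear_combination q * hpba - hab
  unfold IsWeylPair at h ⊢
  rw [smul_mul_smul_comm, smul_mul_smul_comm, h, smul_smul, smul_add, smul_smul, hpbaq, hpba]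
  simp

theorem mul_commutator (h : IsWeylPair q X Y) :
    X * (X * Y - Y * X) = q • ((X * Y - Y * X) * X) := by
  calc X * (X * Y - Y * X) = X * (X * Y) - X * Y * X := by noncomm_ring
    _ = q • (X * Y * X - Y * X * X) := by
      rw [h, mul_add, mul_smul_comm, ← mul_assoc, h]
      simp only [add_mul, smul_mul_assoc, smul_add, smul_sub]
      noncomm_ring
    _ = q • ((X * Y - Y * X) * X) := by rw [sub_mul]

theorem mul_one_sub_smul_eq_one (h : IsWeylPair q X Y) (hXY : Commute X Y) :
    X * ((1 - q) • Y) = 1 := by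
  rw [mul_smul_comm, sub_smul, one_smul, sub_eq_iff_eq_add']
  nth_rw 2 [hXY.eq]
  exact h

theorem eq_smul_of_triangular {R : Type*} [CommRing R] [IsDomain R] [Algebra K R]
    {x₀ x₁ y₀ y₁ b c : R} (h : IsWeylPair q !![x₀, b; 0, x₁] !![y₀, c; 0, y₁])
    (hXY : ¬ Commute !![x₀, b; 0, x₁] !![y₀, c; 0, y₁]) : x₀ = q • x₁ := by
  set z := x₀ * c + b * y₁ - (y₀ * b + c * x₁) with hz
  have h_comm : !![x₀, b; 0, x₁] * !![y₀, c; 0, y₁] - !![y₀, c; 0, y₁] * !![x₀, b; 0, x₁] =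
      !![0, z; 0, 0] := by
    ext i j
    fin_cases i <;> fin_cases j <;> simp [hz, mul_comm]
  have hz_ne : z ≠ 0 := by
    intro hz₀
    refine hXY (sub_eq_zero.1 (h_comm.trans ?_))
    rw [hz₀]
    exact (Matrix.eta_fin_two 0).symm
  have h_entry := congrFun₂ (h_comm ▸ h.mul_commutator) 0 1
  refine mul_right_cancel₀ hz_ne ?_
  simpa [mul_comm z] using h_entry

end IsWeylPair

/-- The representation `Φ` on `R²` is upper triangular with diagonal characters `f` and `g`, that
is, an extension of `g` by `f`. -/
def IsTriangular {K A R : Type*} [CommSemiring K] [Semiring A] [Algebra K A] [CommSemiring R]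
    [Algebra K R] (Φ : A →ₐ[K] Matrix (Fin 2) (Fin 2) R) (f g : A →ₐ[K] R) : Prop :=
  ∀ a, ∃ b, Φ a = !![f a, b; 0, g a]

theorem isTriangular_of_adjoin_eq_top {K A R : Type*} [CommSemiring K] [Semiring A] [Algebra K A]
    [CommSemiring R] [Algebra K R] {Φ : A →ₐ[K] Matrix (Fin 2) (Fin 2) R} {f g : A →ₐ[K] R}
    {s : Set A} (hs : Algebra.adjoin K s = ⊤) (h : ∀ a ∈ s, ∃ b, Φ a = !![f a, b; 0, g a]) :
    IsTriangular Φ f g := by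
  intro a
  have ha : a ∈ Algebra.adjoin K s := hs ▸ Algebra.mem_top
  induction ha using Algebra.adjoin_induction with
  | mem a ha => exact h a ha
  | algebraMap r =>
    refine ⟨0, ?_⟩
    simp only [AlgHom.commutes, Matrix.algebraMap_eq_diagonal]
    ext i j
    fin_cases i <;> fin_cases j <;> simp
  | add a a' _ _ ha ha' =>
    obtain ⟨⟨b, hb⟩, ⟨b', hb'⟩⟩ := ha, ha'
    exact ⟨b + b', by simp [hb, hb']⟩
  | mul a a' _ _ ha ha' =>
    obtain ⟨⟨b, hb⟩, ⟨b', hb'⟩⟩ := ha, ha'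
    exact ⟨f a * b' + b * g a', by simp [hb, hb']⟩

namespace QuantumWeyl

variable {K : Type*} [Field K] {p q : K}

/-- The generator `x` of `A_1^q(K)`. -/
noncomputable def x (q : K) : QuantumWeyl K q :=
  RingQuot.mkAlgHom K (WeylRel K q) (FreeAlgebra.ι K 0)

/-- The generator `y` of `A_1^q(K)`. -/
noncomputable def y (q : K) : QuantumWeyl K q :=
  RingQuot.mkAlgHom K (WeylRel K q) (FreeAlgebra.ι K 1)

theorem isWeylPair_x_y (q : K) : IsWeylPair q (x q) (y q) := by
  simpa [IsWeylPair, x, y] using RingQuot.mkAlgHom_rel K (WeylRel.rel (K := K) (q := q))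

theorem adjoin_x_y (q : K) : Algebra.adjoin K {x q, y q} = ⊤ := by
  have h_range : {x q, y q} =
      RingQuot.mkAlgHom K (WeylRel K q) '' Set.range (FreeAlgebra.ι K) := by
    ext
    simp [Fin.exists_fin_two, eq_comm, x, y]
  rw [h_range, ← AlgHom.map_adjoin, FreeAlgebra.adjoin_range_ι, Algebra.map_top,
    AlgHom.range_eq_top]
  exact RingQuot.mkAlgHom_surjective K _

section UniversalProperty

variable {A : Type*} [Ring A] [Algebra K A]

/-- The universal property of `A_1^q(K)`: the homomorphism sending `x`, `y` to a given Weyl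
pair. -/
noncomputable def lift {X Y : A} (h : IsWeylPair q X Y) : QuantumWeyl K q →ₐ[K] A :=
  RingQuot.liftAlgHom K ⟨FreeAlgebra.lift K ![X, Y], by
    rintro _ _ ⟨⟩
    simpa [IsWeylPair] using h⟩

@[simp]
theorem lift_x {X Y : A} (h : IsWeylPair q X Y) : lift h (x q) = X := by
  simp [lift, x]

@[simp]
theorem lift_y {X Y : A} (h : IsWeylPair q X Y) : lift h (y q) = Y := by
  simp [lift, y]

theorem hom_ext {f g : QuantumWeyl K q →ₐ[K] A} (hx : f (x q) = g (x q))
    (hy : f (y q) = g (y q)) : f = g :=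
  AlgHom.ext_of_adjoin_eq_top (adjoin_x_y q) (by rintro _ (rfl | rfl) <;> assumption)

theorem range_le_of_mem {f : QuantumWeyl K q →ₐ[K] A} {S : Subalgebra K A} (hx : f (x q) ∈ S)
    (hy : f (y q) ∈ S) : f.range ≤ S := by
  rw [← Algebra.map_top, ← adjoin_x_y, AlgHom.map_adjoin, Algebra.adjoin_le_iff]
  rintro _ ⟨_, rfl | rfl, rfl⟩ <;> assumption

theorem commute_map {f : QuantumWeyl K q →ₐ[K] A} (h : Commute (f (x q)) (f (y q)))
    (a b : QuantumWeyl K q) : Commute (f a) (f b) := by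
  let S := Algebra.adjoin K {f (x q), f (y q)}
  have h_range : f.range ≤ S :=
    range_le_of_mem (Algebra.subset_adjoin (by simp)) (Algebra.subset_adjoin (by simp))
  have : IsMulCommutative S := Algebra.isMulCommutative_adjoin K (by simp [h.eq])
  exact setLike_mul_comm (h_range ⟨a, rfl⟩) (h_range ⟨b, rfl⟩)

end UniversalProperty

/-- For `p q = 1`, the isomorphism `A_1^p(K) ≃ A_1^q(K)` given by `x ↦ y` and `y ↦ -q x`. -/
noncomputable def swapEquiv (hpq : p * q = 1) : QuantumWeyl K p ≃ₐ[K] QuantumWeyl K q :=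
  AlgEquiv.ofAlgHom
    (lift ((isWeylPair_x_y q).swap hpq (one_mul (-q))))
    (lift ((isWeylPair_x_y p).swap ((mul_comm q p).trans hpq) (mul_one (-p))))
    (hom_ext (by simp [smul_smul, hpq]) (by simp))
    (hom_ext (by simp) (by simp [smul_smul, mul_comm q, hpq]))

section Characters

open LaurentPolynomial

theorem ne_one_of_algHom {R : Type*} [CommRing R] [Nontrivial R] [Algebra K R]
    (f : QuantumWeyl K q →ₐ[K] R) : q ≠ 1 := by
  rintro rfl
  simpa using ((isWeylPair_x_y 1).map f).mul_one_sub_smul_eq_one (.all _ _)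

/-- The character of `A_1^q(K)` given by `x ↦ T` and `y ↦ (1 - q)⁻¹ T⁻¹`. -/
noncomputable def laurentCharacter (hq : q ≠ 1) : QuantumWeyl K q →ₐ[K] K[T;T⁻¹] :=
  lift (X := T 1) (Y := (1 - q)⁻¹ • T (-1)) <| by
    have hq' : 1 - q ≠ 0 := sub_ne_zero.2 hq.symm
    rw [IsWeylPair, ← sub_eq_iff_eq_add', mul_comm (T 1), smul_mul_assoc, ← T_add, smul_smul,
      ← sub_smul, ← one_sub_mul, mul_inv_cancel₀ hq']
    simp

@[simp]
theorem laurentCharacter_x (hq : q ≠ 1) : laurentCharacter hq (x q) = T 1 := lift_x _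

theorem exists_map_x_eq_smul_T {f : QuantumWeyl K q →ₐ[K] K[T;T⁻¹]} (hf : T 1 ∈ f.range) :
    ∃ (u : Kˣ) (n : ℤ), IsUnit n ∧ f (x q) = u • T n := by
  obtain ⟨u, n, hx, hy⟩ := exists_eq_smul_T_of_mul_eq_one
    (((isWeylPair_x_y q).map f).mul_one_sub_smul_eq_one (.all _ _))
  let S := (AddMonoidAlgebra.mapDomainAlgHom K K (AddMonoidHom.mulLeft n)).range
  have hT (k : ℤ) : (T (n * k) : K[T;T⁻¹]) ∈ S := ⟨T k, AddMonoidAlgebra.mapDomain_single⟩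
  have hxS : f (x q) ∈ S := by
    rw [hx]
    exact S.smul_mem (by simpa using hT 1) (u : K)
  have hyS : f (y q) ∈ S := by
    have hq : 1 - q ≠ 0 := sub_ne_zero.2 (ne_one_of_algHom f).symm
    refine (S.toSubmodule.smul_mem_iff hq).1 ?_
    rw [hy]
    exact S.smul_mem (by simpa using hT (-1)) (u⁻¹ : Kˣ).val
  exact ⟨u, n, isUnit_of_dvd_one (dvd_of_T_mem_range_mapDomain (range_le_of_mem hxS hyS hf)), hx⟩

end Characters

section Extensions

variable {R : Type*} [CommRing R] [Algebra K R] {f g : QuantumWeyl K q →ₐ[K] R}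

theorem map_x_eq_smul_of_isTriangular [IsDomain R]
    {Φ : QuantumWeyl K q →ₐ[K] Matrix (Fin 2) (Fin 2) R} (hΦ : IsTriangular Φ f g)
    (h_comm : ¬ Commute (Φ (x q)) (Φ (y q))) : f (x q) = q • g (x q) := by
  obtain ⟨⟨b, hb⟩, ⟨c, hc⟩⟩ := hΦ (x q), hΦ (y q)
  have h := (isWeylPair_x_y q).map Φ
  rw [hb, hc] at h h_comm
  exact h.eq_smul_of_triangular h_comm

/-- Any two characters with `f x = q g x` are the diagonal of a triangular representation in
which the off-diagonal entries of `x` and `y` are `0` and `1`. -/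
noncomputable def extension (h : f (x q) = q • g (x q)) :
    QuantumWeyl K q →ₐ[K] Matrix (Fin 2) (Fin 2) R :=
  lift (X := !![f (x q), 0; 0, g (x q)]) (Y := !![f (y q), 1; 0, g (y q)]) <| by
    have hf := (isWeylPair_x_y q).map f
    have hg := (isWeylPair_x_y q).map g
    unfold IsWeylPair at hf hg ⊢
    ext i j
    fin_cases i <;> fin_cases j <;> simp [← h, hf, hg]

theorem isTriangular_extension (h : f (x q) = q • g (x q)) :
    IsTriangular (extension h) f g := by
  refine isTriangular_of_adjoin_eq_top (adjoin_x_y q) ?_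
  rintro _ (rfl | rfl)
  exacts [⟨0, lift_x _⟩, ⟨1, lift_y _⟩]

theorem not_commute_extension [Nontrivial R] (h : f (x q) = q • g (x q)) :
    ¬ Commute (extension h (x q)) (extension h (y q)) := by
  intro h_comm
  rw [extension, lift_x, lift_y] at h_comm
  have hfg : q • g (x q) = g (x q) := by
    rw [← h]
    simpa using congrFun₂ h_comm.eq 0 1
  have h_unit := ((isWeylPair_x_y q).map g).mul_one_sub_smul_eq_one (.all _ _)
  rw [mul_smul_comm, ← smul_mul_assoc, sub_smul, one_smul, hfg, sub_self, zero_mul] at h_unit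
  exact zero_ne_one h_unit

theorem map_x_eq_smul_of_algEquiv [IsDomain R] (φ : QuantumWeyl K p ≃ₐ[K] QuantumWeyl K q)
    (h : f (x q) = q • g (x q)) : f (φ (x p)) = p • g (φ (x p)) := by
  let Φ := (extension h).comp φ.toAlgHom
  have hΦ : IsTriangular Φ (f.comp φ.toAlgHom) (g.comp φ.toAlgHom) :=
    fun a => isTriangular_extension h (φ a)
  refine map_x_eq_smul_of_isTriangular hΦ fun hΦ_comm => not_commute_extension h ?_
  simpa [Φ] using commute_map hΦ_comm (φ.symm (x q)) (φ.symm (y q))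

end Extensions

open LaurentPolynomial in
theorem eq_or_mul_eq_one_of_algEquiv {q : Kˣ} (hq : (q : K) ≠ 1)
    (φ : QuantumWeyl K p ≃ₐ[K] QuantumWeyl K (q : K)) : p = q ∨ p * q = 1 := by
  let g := laurentCharacter hq
  obtain ⟨u, n, hn, hx⟩ := exists_map_x_eq_smul_T (f := g.comp φ.toAlgHom)
    ⟨φ.symm (x q.val), by simp [g]⟩
  replace hx : g (φ (x p)) = u • T n := hx
  have h_scale : laurentScale q (g (φ (x p))) = p • g (φ (x p)) :=
    map_x_eq_smul_of_algEquiv (f := (laurentScale q).comp g) φ (by simp [g, Units.smul_def])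
  have hpq : ((q ^ n : Kˣ) : K) = p := by
    have h_coeff := congrArg (fun P : K[T;T⁻¹] => P.coeff n) h_scale
    simp only [hx, Units.smul_def, map_smul, laurentScale_T] at h_coeff
    refine mul_left_cancel₀ u.ne_zero ?_
    simpa [mul_comm p] using h_coeff
  rcases Int.isUnit_iff.1 hn with rfl | rfl
  · exact .inl (by simpa using hpq.symm)
  · exact .inr (by simp [← hpq])

theorem eq_one_iff_of_algEquiv (φ : QuantumWeyl K p ≃ₐ[K] QuantumWeyl K q) : p = 1 ↔ q = 1 := by
  constructor <;> contrapose
  · exact fun hq => ne_one_of_algHom ((laurentCharacter hq).comp φ.toAlgHom)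
  · exact fun hp => ne_one_of_algHom ((laurentCharacter hp).comp φ.symm.toAlgHom)

end QuantumWeyl

theorem quantumWeyl_iso_iff_general {K : Type*} [Field K] (p q : K) :
    Nonempty (QuantumWeyl K p ≃ₐ[K] QuantumWeyl K q) ↔ p = q ∨ p * q = 1 := by
  constructor
  · rintro ⟨φ⟩
    by_cases hq : q = 1
    · exact .inl (((QuantumWeyl.eq_one_iff_of_algEquiv φ).2 hq).trans hq.symm)
    have hp : p ≠ 1 := mt (QuantumWeyl.eq_one_iff_of_algEquiv φ).1 hq
    rcases eq_or_ne q 0 with rfl | hq₀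
    · rcases eq_or_ne p 0 with rfl | hp₀
      · exact .inl rfl
      · lift p to Kˣ using hp₀.isUnit
        exact (QuantumWeyl.eq_or_mul_eq_one_of_algEquiv hp φ.symm).imp Eq.symm
          ((mul_comm _ _).trans ·)
    · lift q to Kˣ using hq₀.isUnit
      exact QuantumWeyl.eq_or_mul_eq_one_of_algEquiv hq φ
  · rintro (rfl | hpq)
    exacts [⟨AlgEquiv.refl⟩, ⟨QuantumWeyl.swapEquiv hpq⟩]

/-- `A_1^p(K) ≅ A_1^q(K)` iff `p = q` or `p = q⁻¹`. -/
theorem quantumWeyl_iso_iff (K : Type*) [Field K] [CharZero K] (p q : Kˣ) :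
    Nonempty (QuantumWeyl K (p : K) ≃ₐ[K] QuantumWeyl K (q : K)) ↔ (p = q ∨ p = q⁻¹) := by
  rw [quantumWeyl_iso_iff_general, Units.val_inj, eq_inv_iff_mul_eq_one, ← Units.val_mul,
    Units.val_eq_one]
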